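/- For all integers n ≥ 1, 0 ≤ i ≤ n−2 and 0 ≤ k ≤ n−1, one has 2(i+1)(i−2n−1)(2i−2n−1)·f'_{n,i}(k) + (i−3n−2)(i−n+1)(i+n+2)·f'_{n,i+1}(k) = P(k+1,i) − P(k,i). -/

import Mathlib

/-- `invFact m = 1/m!`, with the convention `1/m! = 0` for negative integers `m`. -/
def invFact (m : ℤ) : ℚ := if 0 ≤ m then ((m.toNat).factorial : ℚ)⁻¹ else 0

/-- `f'_{n,i}(k) = (−1)^{k+1}·(3n−3k+2)·C_{n−k}·(n+k+1)!·(2n−k+1)!·(2n−i−k)!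
   / (k!·(3n−k+2)!·(n+i−2k+1)!·(n+k−2i)!)`, with `1/m! = 0` for `m < 0`. -/
def f'nik (n i k : ℕ) : ℚ :=
  (-1)^(k+1) * (3*(n:ℚ) - 3*(k:ℚ) + 2) * (catalan (n-k) : ℚ) *
    (Nat.factorial (n+k+1) : ℚ) * (Nat.factorial (2*n-k+1) : ℚ) *
    (Nat.factorial (2*n-i-k) : ℚ) /
    ((Nat.factorial k : ℚ) * (Nat.factorial (3*n-k+2) : ℚ)) *
    invFact ((n:ℤ) + (i:ℤ) - 2*(k:ℤ) + 1) * invFact ((n:ℤ) + (k:ℤ) - 2*(i:ℤ))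

/-- `P(k,i) = (−1)^{k+1}·6k·(i−n)·(2n+1−2k)·(2n+2−k)·C_{n−k}·(n+k+1)!·(2n−k+1)!·(2n−i−k)!
   / (k!·(3n−k+2)!·(n+i+2−2k)!·(n+k−2i−1)!)`, with `1/m! = 0` for `m < 0`. -/
def Pki (n k i : ℕ) : ℚ :=
  (-1)^(k+1) * 6 * (k:ℚ) * ((i:ℚ) - (n:ℚ)) * (2*(n:ℚ)+1-2*(k:ℚ)) * (2*(n:ℚ)+2-(k:ℚ)) *
    (catalan (n-k) : ℚ) *
    (Nat.factorial (n+k+1) : ℚ) * (Nat.factorial (2*n-k+1) : ℚ) *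
    (Nat.factorial (2*n-i-k) : ℚ) /
    ((Nat.factorial k : ℚ) * (Nat.factorial (3*n-k+2) : ℚ)) *
    invFact ((n:ℤ) + (i:ℤ) + 2 - 2*(k:ℤ)) * invFact ((n:ℤ) + (k:ℤ) - 2*(i:ℤ) - 1)

/-!
The four terms of the identity are polynomial multiples of one hypergeometric term, `baseTerm`.
The recurrence `1/m! = (m+1) · 1/(m+1)!` holds at every integer `m` under the convention
`1/m! = 0` for `m < 0`, so vanishing terms need no separate treatment. In `P(k+1,i)` the factors
`(k+1)(2n−2k−1)(2n−k+1)` of the certificate clear exactly the denominators that the factorials and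
the recurrence `(m+2) C_{m+1} = 2(2m+1) C_m` contribute when `k` is shifted.
What is left is a polynomial identity in `n`, `i`, `k`.
-/

theorem invFact_eq_add_one_mul (m : ℤ) : invFact m = ((m : ℚ) + 1) * invFact (m + 1) := by
  unfold invFact
  rcases lt_trichotomy m (-1) with h | rfl | h
  · rw [if_neg (by omega), if_neg (by omega), mul_zero]
  · simp
  · lift m to ℕ using by omega
    rw [if_pos (by omega), if_pos (by omega), Int.toNat_natCast, Int.toNat_natCast_add_one,
      Nat.factorial_succ]
    push_cast
    field_simp

theorem add_two_mul_catalan_succ (m : ℕ) :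
    (m + 2) * catalan (m + 1) = 2 * (2 * m + 1) * catalan m := by
  have hcentral := Nat.succ_mul_centralBinom_succ m
  rw [← succ_mul_catalan_eq_centralBinom, ← succ_mul_catalan_eq_centralBinom] at hcentral
  refine Nat.eq_of_mul_eq_mul_left m.add_one_pos ?_
  linear_combination hcentral

/-- The factor shared by `f'_{n,i}(k)` and `P(k,i)`: the sign, the Catalan number and all the
factorials whose arguments stay nonnegative. The subtractions are truncated, so it has its intended
value only for `k ≤ n` and `i + k ≤ 2n`. -/
def certKernel (n i k : ℕ) : ℚ :=
  (-1) ^ (k + 1) * catalan (n - k) * (n + k + 1).factorial * (2 * n - k + 1).factorial *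
    (2 * n - i - k).factorial / (k.factorial * (3 * n - k + 2).factorial)

/-- The hypergeometric term of which `f'_{n,i}(k)`, `f'_{n,i+1}(k)`, `P(k,i)` and `P(k+1,i)` are
polynomial multiples. -/
def baseTerm (n i k : ℕ) : ℚ :=
  certKernel n (i + 1) k * invFact ((n : ℤ) + i + 2 - 2 * k) * invFact ((n : ℤ) + k - 2 * i)

section

variable {n i k : ℕ}

theorem certKernel_eq_mul_certKernel_succ_left (hik : i + k < 2 * n) :
    certKernel n i k = (2 * n - i - k) * certKernel n (i + 1) k := by
  obtain ⟨t, ht⟩ := Nat.exists_eq_add_of_lt hik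
  have htq : 2 * (n : ℚ) = i + k + t + 1 := mod_cast ht
  have hfact : ((2 * n - i - k).factorial : ℚ) =
      (2 * n - i - k) * (2 * n - (i + 1) - k).factorial := by
    rw [show 2 * n - i - k = t + 1 by omega, show 2 * n - (i + 1) - k = t by omega,
      Nat.factorial_succ, htq]
    push_cast
    ring
  rw [certKernel, certKernel, hfact]
  ring

theorem mul_certKernel_succ_right (hk : k < n) :
    2 * (k + 1) * (2 * n - 2 * k - 1) * (2 * n - k + 1) * certKernel n i (k + 1) =
      -((n - k + 1) * (n + k + 2) * (3 * n - k + 2)) * certKernel n (i + 1) k := by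
  obtain ⟨m, rfl⟩ := Nat.exists_eq_add_of_lt hk
  have hcatalan : ((m : ℚ) + 2) * catalan (m + 1) = 2 * (2 * m + 1) * catalan m :=
    mod_cast add_two_mul_catalan_succ m
  rw [certKernel, certKernel,
    show k + m + 1 - k = m + 1 by omega,
    show k + m + 1 - (k + 1) = m by omega,
    show 2 * (k + m + 1) - k + 1 = (k + 2 * m + 2) + 1 by omega,
    show 2 * (k + m + 1) - (k + 1) + 1 = k + 2 * m + 2 by omega,
    show 3 * (k + m + 1) - k + 2 = (2 * k + 3 * m + 4) + 1 by omega,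
    show 3 * (k + m + 1) - (k + 1) + 2 = 2 * k + 3 * m + 4 by omega,
    show 2 * (k + m + 1) - (i + 1) - k = 2 * (k + m + 1) - i - (k + 1) by omega,
    show k + m + 1 + (k + 1) + 1 = (k + m + 1 + k + 1) + 1 by omega,
    Nat.factorial_succ k, Nat.factorial_succ (k + 2 * m + 2),
    Nat.factorial_succ (2 * k + 3 * m + 4), Nat.factorial_succ (k + m + 1 + k + 1)]
  push_cast
  field_simp
  linear_combination -(-1) ^ k * ((k : ℚ) + 2 * m + 3) * (2 * k + m + 3) *
    (2 * k + 3 * m + 5) * hcatalan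

theorem f'nik_eq_certKernel_mul (n i k : ℕ) :
    f'nik n i k = (3 * n - 3 * k + 2) * certKernel n i k *
      invFact ((n : ℤ) + i - 2 * k + 1) * invFact ((n : ℤ) + k - 2 * i) := by
  rw [f'nik, certKernel]
  ring

theorem Pki_eq_certKernel_mul (n i k : ℕ) :
    Pki n k i = 6 * k * (i - n) * (2 * n + 1 - 2 * k) * (2 * n + 2 - k) * certKernel n i k *
      invFact ((n : ℤ) + i + 2 - 2 * k) * invFact ((n : ℤ) + k - 2 * i - 1) := by
  rw [Pki, certKernel]
  ring

theorem f'nik_eq_mul_baseTerm (hik : i + k < 2 * n) :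
    f'nik n i k =
      (3 * n - 3 * k + 2) * (2 * n - i - k) * (n + i - 2 * k + 2) * baseTerm n i k := by
  have hinv := invFact_eq_add_one_mul ((n : ℤ) + i - 2 * k + 1)
  rw [show (n : ℤ) + i - 2 * k + 1 + 1 = n + i + 2 - 2 * k by ring] at hinv
  rw [f'nik_eq_certKernel_mul, certKernel_eq_mul_certKernel_succ_left hik, hinv, baseTerm]
  push_cast
  ring

theorem f'nik_succ_eq_mul_baseTerm (n i k : ℕ) :
    f'nik n (i + 1) k =
      (3 * n - 3 * k + 2) * (n + k - 2 * i - 1) * (n + k - 2 * i) * baseTerm n i k := by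
  have hinv₁ := invFact_eq_add_one_mul ((n : ℤ) + k - 2 * i - 2)
  have hinv₂ := invFact_eq_add_one_mul ((n : ℤ) + k - 2 * i - 1)
  rw [show (n : ℤ) + k - 2 * i - 2 + 1 = n + k - 2 * i - 1 by ring] at hinv₁
  rw [sub_add_cancel] at hinv₂
  rw [f'nik_eq_certKernel_mul,
    show (n : ℤ) + (i + 1 : ℕ) - 2 * k + 1 = n + i + 2 - 2 * k by push_cast; ring,
    show (n : ℤ) + k - 2 * (i + 1 : ℕ) = n + k - 2 * i - 2 by push_cast; ring,
    hinv₁, hinv₂, baseTerm]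
  push_cast
  ring

theorem Pki_eq_mul_baseTerm (hik : i + k < 2 * n) :
    Pki n k i =
      6 * k * (i - n) * (2 * n + 1 - 2 * k) * (2 * n + 2 - k) * (2 * n - i - k) *
        (n + k - 2 * i) * baseTerm n i k := by
  have hinv := invFact_eq_add_one_mul ((n : ℤ) + k - 2 * i - 1)
  rw [sub_add_cancel] at hinv
  rw [Pki_eq_certKernel_mul, certKernel_eq_mul_certKernel_succ_left hik, hinv, baseTerm]
  push_cast
  ring

theorem Pki_succ_eq_mul_baseTerm (hk : k < n) :
    Pki n (k + 1) i =
      -3 * (i - n) * (n - k + 1) * (n + k + 2) * (3 * n - k + 2) *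
        (n + i - 2 * k + 1) * (n + i - 2 * k + 2) * baseTerm n i k := by
  have hinv₁ := invFact_eq_add_one_mul ((n : ℤ) + i - 2 * k)
  have hinv₂ := invFact_eq_add_one_mul ((n : ℤ) + i - 2 * k + 1)
  rw [show (n : ℤ) + i - 2 * k + 1 + 1 = n + i + 2 - 2 * k by ring] at hinv₂
  rw [Pki_eq_certKernel_mul,
    show (n : ℤ) + i + 2 - 2 * (k + 1 : ℕ) = n + i - 2 * k by push_cast; ring,
    show (n : ℤ) + (k + 1 : ℕ) - 2 * i - 1 = n + k - 2 * i by push_cast; ring,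
    hinv₁, hinv₂, baseTerm]
  push_cast
  linear_combination 3 * ((i : ℚ) - n) * (n + i - 2 * k + 1) * (n + i - 2 * k + 2) *
    invFact ((n : ℤ) + i + 2 - 2 * k) * invFact ((n : ℤ) + k - 2 * i) *
    mul_certKernel_succ_right (i := i) hk

end

/-- For all `n ≥ 1`, `0 ≤ i ≤ n−2`, `0 ≤ k ≤ n−1`:
`2(i+1)(i−2n−1)(2i−2n−1)·f'_{n,i}(k) + (i−3n−2)(i−n+1)(i+n+2)·f'_{n,i+1}(k)
  = P(k+1,i) − P(k,i)`. -/
theorem f'nik_certificate (n : ℕ) (hn : 1 ≤ n) (i k : ℕ) (hi : i + 2 ≤ n) (hk : k + 1 ≤ n) :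
    2*((i:ℚ)+1)*((i:ℚ)-2*(n:ℚ)-1)*(2*(i:ℚ)-2*(n:ℚ)-1) * f'nik n i k
      + ((i:ℚ)-3*(n:ℚ)-2)*((i:ℚ)-(n:ℚ)+1)*((i:ℚ)+(n:ℚ)+2) * f'nik n (i+1) k
      = Pki n (k+1) i - Pki n k i := by
  have hik : i + k < 2 * n := by omega
  rw [f'nik_eq_mul_baseTerm hik, f'nik_succ_eq_mul_baseTerm, Pki_succ_eq_mul_baseTerm hk,
    Pki_eq_mul_baseTerm hik]
  ring
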